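/- Let \Omega \subset \mathbb{C}^n be a bounded Reinhardt domain and f \in A^\infty(\Omega) with Laurent expansion f = \sum_{\alpha \in \mathbb{Z}^n} c_\alpha e_\alpha. Then for every k \in \mathbb{N}, \sum_{\alpha \in \mathbb{Z}^n} \|c_\alpha e_\alpha\|'_{k,\Omega} < \infty, i.e., the Laurent series converges absolutely in the Fréchet topology of A^\infty(\Omega). -/

import Mathlib

open Filter Topology

/-- The holomorphic partial derivative in the `j`-th coordinate direction. -/
noncomputable def pderivC {n : ℕ} (j : Fin n) (f : (Fin n → ℂ) → ℂ) : (Fin n → ℂ) → ℂ :=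
  fun z => fderiv ℂ f z (Pi.single j 1)

/-- The iterated holomorphic partial derivative `D^α f` of multi-order `α`. -/
noncomputable def Dmulti {n : ℕ} (α : Fin n → ℕ) (f : (Fin n → ℂ) → ℂ) : (Fin n → ℂ) → ℂ :=
  (List.finRange n).foldr (fun j g => (pderivC j)^[α j] g) f

/-- `Ω` is a Reinhardt set: invariant under unimodular rotations of the coordinates. -/
def IsReinhardt {n : ℕ} (Ω : Set (Fin n → ℂ)) : Prop :=
  ∀ z ∈ Ω, ∀ lam : Fin n → ℂ, (∀ j, ‖lam j‖ = 1) → (fun j => lam j * z j) ∈ Ω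

/-- The polyannulus determined by radii `r`, `R` and a choice, for each coordinate,
of annulus (`b j = true`) or disc (`b j = false`). -/
def polyann {n : ℕ} (r R : Fin n → ℝ) (b : Fin n → Bool) : Set (Fin n → ℂ) :=
  {z | ∀ j, if b j then r j < ‖z j‖ ∧ ‖z j‖ < R j else ‖z j‖ < R j}

/-- `f` is holomorphic on `Ω` and smooth up to the boundary: every iterated holomorphic
derivative of `f` is holomorphic on `Ω` and extends continuously to the closure. -/
def AInfinity {n : ℕ} (Ω : Set (Fin n → ℂ)) (f : (Fin n → ℂ) → ℂ) : Prop :=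
  DifferentiableOn ℂ f Ω ∧
    ∀ α : Fin n → ℕ, DifferentiableOn ℂ (Dmulti α f) Ω ∧
      ∃ g : (Fin n → ℂ) → ℂ, ContinuousOn g (closure Ω) ∧ Set.EqOn (Dmulti α f) g Ω

/-- The sup-seminorm `‖f‖_{k,Ω}` over derivatives of total order at most `k`. -/
noncomputable def snormTotal {n : ℕ} (k : ℕ) (Ω : Set (Fin n → ℂ))
    (f : (Fin n → ℂ) → ℂ) : ℝ :=
  sSup {x | ∃ α : Fin n → ℕ, ∃ z ∈ Ω, (∑ j, α j) ≤ k ∧ x = ‖Dmulti α f z‖}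

/-- The sup-seminorm `‖f‖'_{k,Ω}` over derivatives of order at most `k` in each variable. -/
noncomputable def snormMax {n : ℕ} (k : ℕ) (Ω : Set (Fin n → ℂ))
    (f : (Fin n → ℂ) → ℂ) : ℝ :=
  sSup {x | ∃ α : Fin n → ℕ, ∃ z ∈ Ω, (∀ j, α j ≤ k) ∧ x = ‖Dmulti α f z‖}

/-- `μ_ℓ`: `1/(ℓ(ℓ-1))` for `ℓ ≠ 0,1` and `1` for `ℓ ∈ {0,1}`. -/
noncomputable def mu (l : ℤ) : ℝ :=
  if l = 0 ∨ l = 1 then 1 else 1 / ((l : ℝ) * ((l : ℝ) - 1))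

/-!
The torus acts on `Ω` by rotating the coordinates, and `c_α e_α` is the component of weight `α` of
`f` under this action: an integral of `f` over torus orbits. Differentiating under the integral,
`D^β (c_α e_α)` is the component of weight `α - β` of `D^β f`, so it is bounded on `Ω` by
`sup |D^β f|`, for every `β` and uniformly in `α`. Off the coordinate hyperplanes, two further
derivatives of `z ^ l` in one variable produce the factor `l (l - 1) / z ^ 2`. Hence, `Ω` being
bounded, the bounds for derivatives of order up to `β + (2, …, 2)` improve the one for
`D^β (c_α e_α)` by the factor `∏ j, μ_(α j - β j)`, which is summable over `α`. By continuity this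
estimate persists on the hyperplanes.
-/

open MeasureTheory Metric UnitAddTorus

theorem le_of_forall_mem_inter_dense_le {X Y : Type*} [TopologicalSpace X] [TopologicalSpace Y]
    [Preorder Y] [OrderClosedTopology Y] {s t : Set X} (hs : IsOpen s) (ht : Dense t) {g : X → Y}
    (hg : ContinuousOn g s) {B : Y} (h : ∀ x ∈ s ∩ t, g x ≤ B) {x : X} (hx : x ∈ s) : g x ≤ B :=
  ContinuousWithinAt.closure_le (ht.open_subset_closure_inter hs hx)
    ((hg x hx).mono Set.inter_subset_left) continuousWithinAt_const h

theorem summable_prod_pi {ι κ : Type*} [Fintype ι] {g : ι → κ → ℝ} (hg₀ : ∀ i k, 0 ≤ g i k)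
    (hg : ∀ i, Summable (g i)) : Summable fun a : ι → κ => ∏ i, g i (a i) := by
  classical
  refine summable_of_sum_le (c := ∏ i, ∑' k, g i k)
    (fun a => Finset.prod_nonneg fun i _ => hg₀ i (a i)) fun s => ?_
  calc ∑ a ∈ s, ∏ i, g i (a i)
      ≤ ∑ a ∈ Fintype.piFinset fun i => s.image (· i), ∏ i, g i (a i) :=
        Finset.sum_le_sum_of_subset_of_nonneg
          (fun a ha => Fintype.mem_piFinset.2 fun i => Finset.mem_image_of_mem (· i) ha)
          fun a _ _ => Finset.prod_nonneg fun i _ => hg₀ i (a i)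
    _ = ∏ i, ∑ k ∈ s.image (· i), g i k := (Finset.prod_univ_sum _ _).symm
    _ ≤ ∏ i, ∑' k, g i k :=
        Finset.prod_le_prod (fun i _ => Finset.sum_nonneg fun k _ => hg₀ i k)
          fun i _ => (hg i).sum_le_tsum _ fun k _ => hg₀ i k

section IteratedPartialDerivatives

variable {n : ℕ}

theorem foldr_iterate_eq_self {ι α : Type*} (p : ι → α → α) (β : ι → ℕ) (x : α) {l : List ι}
    (hl : ∀ i ∈ l, β i = 0) : l.foldr (fun i y => (p i)^[β i] y) x = x := by
  induction l with
  | nil => rfl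
  | cons i l ih =>
    rw [List.forall_mem_cons] at hl
    rw [List.foldr_cons, ih hl.2, hl.1, Function.iterate_zero, id]

@[simp]
theorem Dmulti_zero (f : (Fin n → ℂ) → ℂ) : Dmulti 0 f = f :=
  foldr_iterate_eq_self pderivC 0 f fun _ _ => rfl

theorem Dmulti_add_single {β : Fin n → ℕ} {j : Fin n} (hβ : ∀ i < j, β i = 0)
    (f : (Fin n → ℂ) → ℂ) :
    Dmulti (β + Pi.single j 1) f = pderivC j (Dmulti β f) := by
  obtain ⟨s, t, hst⟩ := List.append_of_mem (List.mem_finRange j)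
  have hsorted := List.pairwise_lt_finRange n
  rw [hst, List.pairwise_append, List.pairwise_cons] at hsorted
  obtain ⟨-, ⟨ht, -⟩, hs⟩ := hsorted
  have hs_lt : ∀ i ∈ s, i < j := fun i hi => hs i hi j List.mem_cons_self
  have htail : t.foldr (fun i g => (pderivC i)^[(β + Pi.single j 1 : Fin n → ℕ) i] g) f =
      t.foldr (fun i g => (pderivC i)^[β i] g) f := by
    refine List.foldr_ext _ _ _ fun i hi g => ?_
    rw [Pi.add_apply, Pi.single_eq_of_ne (ht i hi).ne', add_zero]
  unfold Dmulti
  rw [hst, List.foldr_append, List.foldr_append, List.foldr_cons, List.foldr_cons, htail,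
    foldr_iterate_eq_self pderivC β _ fun i hi => hβ i (hs_lt i hi),
    foldr_iterate_eq_self pderivC _ _ fun i hi => ?_, Pi.add_apply, Pi.single_eq_same,
    Function.iterate_succ_apply']
  rw [Pi.add_apply, hβ i (hs_lt i hi), Pi.single_eq_of_ne (hs_lt i hi).ne, add_zero]

/-- Since `Dmulti` differentiates in a fixed order of the coordinates, a multi-index has to be
built up by increments at or below its least nonzero coordinate. -/
@[elab_as_elim]
theorem multiIndex_induction {P : (Fin n → ℕ) → Prop} (zero : P 0)
    (add_single : ∀ β j, (∀ i < j, β i = 0) → P β → P (β + Pi.single j 1)) (β : Fin n → ℕ) :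
    P β := by
  induction hN : ∑ j, β j generalizing β with
  | zero =>
    have hβ : β = 0 := by simpa [funext_iff] using hN
    exact hβ ▸ zero
  | succ N ih =>
    have hβ : {j | β j ≠ 0}.Nonempty := by
      by_contra! h
      simp_all [Set.eq_empty_iff_forall_notMem]
    obtain ⟨j, hj, hmin⟩ := wellFounded_lt.has_min _ hβ
    have hle : Pi.single j 1 ≤ β :=
      update_le_iff.2 ⟨Nat.one_le_iff_ne_zero.2 hj, fun _ _ => Nat.zero_le _⟩
    have hβ' : β - Pi.single j 1 + Pi.single j 1 = β := tsub_add_cancel_of_le hle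
    rw [← hβ'] at hN ⊢
    refine add_single _ j (fun i hi => ?_) (ih _ ?_)
    · have hi0 : β i = 0 := not_not.1 fun h => hmin i h hi
      rw [Pi.sub_apply, hi0, Nat.zero_sub]
    · simpa [Finset.sum_add_distrib] using hN

theorem pderivC_eqOn {U : Set (Fin n → ℂ)} (hU : IsOpen U) {f g : (Fin n → ℂ) → ℂ}
    (h : U.EqOn f g) (j : Fin n) : U.EqOn (pderivC j f) (pderivC j g) := fun z hz => by
  simp only [pderivC, (h.eventuallyEq_of_mem (hU.mem_nhds hz)).fderiv_eq]

theorem Dmulti_eqOn {U : Set (Fin n → ℂ)} (hU : IsOpen U) {f g : (Fin n → ℂ) → ℂ}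
    (h : U.EqOn f g) (β : Fin n → ℕ) : U.EqOn (Dmulti β f) (Dmulti β g) := by
  induction β using multiIndex_induction with
  | zero => simpa using h
  | add_single β j hβ ih =>
    rw [Dmulti_add_single hβ, Dmulti_add_single hβ]
    exact pderivC_eqOn hU ih j

theorem pderivC_prod (c : ℂ) {φ : Fin n → ℂ → ℂ} {z : Fin n → ℂ}
    (hφ : ∀ k, DifferentiableAt ℂ (φ k) (z k)) (j : Fin n) :
    pderivC j (fun z => c * ∏ k, φ k (z k)) z =
      c * ∏ k, deriv^[(Pi.single j 1 : Fin n → ℕ) k] (φ k) (z k) := by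
  have hfactor (k : Fin n) : HasFDerivAt (fun z : Fin n → ℂ => φ k (z k))
      (deriv (φ k) (z k) • ContinuousLinearMap.proj (R := ℂ) (φ := fun _ => ℂ) k) z :=
    HasDerivAt.comp_hasFDerivAt (f := fun z : Fin n → ℂ => z k) z (hφ k).hasDerivAt
      (hasFDerivAt_apply k z)
  have hprod := (HasFDerivAt.finsetProd (u := Finset.univ) fun k _ => hfactor k).const_mul c
  have herase : ∏ k ∈ Finset.univ.erase j, deriv^[(Pi.single j 1 : Fin n → ℕ) k] (φ k) (z k) =
      ∏ k ∈ Finset.univ.erase j, φ k (z k) :=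
    Finset.prod_congr rfl fun k hk => by simp [Finset.ne_of_mem_erase hk]
  rw [pderivC, hprod.fderiv, ← Finset.prod_erase_mul _ _ (Finset.mem_univ j), herase]
  simp [Pi.single_apply]

theorem Dmulti_prod (c : ℂ) {U : Fin n → Set ℂ} (hU : ∀ k, IsOpen (U k)) {φ : Fin n → ℂ → ℂ}
    (hφ : ∀ k, DifferentiableOn ℂ (φ k) (U k)) (β : Fin n → ℕ) :
    (Set.univ.pi U).EqOn (Dmulti β fun z => c * ∏ k, φ k (z k))
      fun z => c * ∏ k, deriv^[β k] (φ k) (z k) := by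
  induction β using multiIndex_induction with
  | zero => simp [Set.EqOn]
  | add_single β j hβ ih =>
    intro z hz
    have hdiff (k : Fin n) : DifferentiableAt ℂ (deriv^[β k] (φ k)) (z k) :=
      (((hφ k).analyticOnNhd (hU k)).iterated_deriv (β k) (z k)
        (hz k (Set.mem_univ k))).differentiableAt
    rw [Dmulti_add_single hβ, pderivC_eqOn (isOpen_set_pi Set.finite_univ fun k _ => hU k) ih j hz,
      pderivC_prod c hdiff j]
    simp only [← Function.iterate_add_apply, add_comm (Pi.single j 1 _), Pi.add_apply]

end IteratedPartialDerivatives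

/-- The normalised Haar measure on the circle, with respect to which Mathlib's `mFourierCoeff`
integrates. -/
noncomputable local instance : MeasureSpace UnitAddCircle := ⟨AddCircle.haarAddCircle⟩

local instance : IsProbabilityMeasure (volume : Measure UnitAddCircle) :=
  inferInstanceAs (IsProbabilityMeasure AddCircle.haarAddCircle)

section TorusFourierCoefficients

variable {ι : Type*} [Fintype ι]

theorem norm_mFourier_apply (m : ι → ℤ) (x : UnitAddTorus ι) : ‖mFourier m x‖ = 1 := by
  simp only [mFourier, ContinuousMap.coe_mk, norm_prod, fourier_apply, Circle.norm_coe,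
    Finset.prod_const_one]

theorem norm_mFourierCoeff_le {E : Type*} [NormedAddCommGroup E] [NormedSpace ℂ E]
    {F : UnitAddTorus ι → E} {M : ℝ} (hF : ∀ x, ‖F x‖ ≤ M) (m : ι → ℤ) :
    ‖mFourierCoeff F m‖ ≤ M := by
  have h (x : UnitAddTorus ι) : ‖mFourier (-m) x • F x‖ ≤ M := by
    rw [norm_smul, norm_mFourier_apply, one_mul]
    exact hF x
  refine (norm_integral_le_of_norm_le_const (.of_forall h)).trans_eq ?_
  rw [probReal_univ, mul_one]

theorem mFourierCoeff_mFourier [DecidableEq (ι → ℤ)] (k m : ι → ℤ) :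
    mFourierCoeff (mFourier k) m = if m = k then 1 else 0 := by
  rw [← mFourierCoeff_toLp, ← mFourierBasis_repr]
  change mFourierBasis.repr (mFourierLp 2 k) m = _
  rw [← coe_mFourierBasis, HilbertBasis.repr_self, lp.single_apply, Pi.single_apply]

theorem mFourierCoeff_of_hasSum {a : (ι → ℤ) → ℂ} (ha : Summable a) {F : UnitAddTorus ι → ℂ}
    (hF : ∀ x, HasSum (fun k => a k * mFourier k x) (F x)) (m : ι → ℤ) :
    mFourierCoeff F m = a m := by
  classical
  have hint (k : ι → ℤ) :
      Integrable (fun x : UnitAddTorus ι => mFourier (-m) x • (a k * mFourier k x)) :=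
    Continuous.integrable_of_hasCompactSupport (by fun_prop) (.of_compactSpace _)
  have hsum : Summable fun k =>
      ∫ x : UnitAddTorus ι, ‖mFourier (-m) x • (a k * mFourier k x)‖ := by
    simpa [norm_mFourier_apply] using ha.norm
  have hcoeff (k : ι → ℤ) : ∫ x : UnitAddTorus ι, mFourier (-m) x • (a k * mFourier k x) =
      if m = k then a k else 0 := by
    simp only [smul_eq_mul, mul_left_comm _ (a k), integral_const_mul]
    exact (congrArg (a k * ·) (mFourierCoeff_mFourier k m)).trans (by simp)
  have hF_sum : HasSum (fun k => if m = k then a k else 0) (mFourierCoeff F m) := by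
    have h := hasSum_integral_of_summable_integral_norm hint hsum
    simp only [hcoeff, ((hF _).const_smul _).tsum_eq] at h
    exact h
  simpa using hF_sum.tsum_eq.symm

end TorusFourierCoefficients

section HolomorphicParametricIntegral

variable {E G α : Type*} [NormedAddCommGroup E] [NormedSpace ℂ E] [NormedAddCommGroup G]
  [NormedSpace ℂ G]

theorem norm_fderiv_le_of_forall_mem_ball_norm_le {f : E → G} {z w : E} {r M : ℝ} (hr : 0 < r)
    (hf : DifferentiableOn ℂ f (ball z r)) (hM : ∀ v ∈ ball z r, ‖f v‖ ≤ M)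
    (hw : w ∈ ball z (r / 2)) : ‖fderiv ℂ f w‖ ≤ (M + M) / (r / 2) := by
  have hsub : ball w (r / 2) ⊆ ball z r :=
    ball_subset_ball' (by linarith [mem_ball.1 hw])
  refine Complex.norm_fderiv_le_div_of_mapsTo_ball (hf.mono hsub) (fun v hv => ?_) (half_pos hr)
  rw [mem_closedBall_iff_norm]
  exact (norm_sub_le _ _).trans
    (add_le_add (hM v (hsub hv)) (hM w (hsub (mem_ball_self (half_pos hr)))))

variable [NormedSpace ℝ G] [MeasurableSpace α] {μ : Measure α} [IsFiniteMeasure μ]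

theorem hasFDerivAt_integral_of_differentiableOn_ball {F : E → α → G} {F' : α → E →L[ℂ] G} {z : E}
    {r M : ℝ} (hr : 0 < r) (hF_meas : ∀ w ∈ ball z r, AEStronglyMeasurable (F w) μ)
    (hF_diff : ∀ x, DifferentiableOn ℂ (F · x) (ball z r))
    (hF_le : ∀ x, ∀ w ∈ ball z r, ‖F w x‖ ≤ M) (hF'_meas : AEStronglyMeasurable F' μ)
    (hF' : ∀ x, HasFDerivAt (F · x) (F' x) z) :
    Integrable F' μ ∧ HasFDerivAt (fun w => ∫ x, F w x ∂μ) (∫ x, F' x ∂μ) z := by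
  obtain rfl : F' = fun x => fderiv ℂ (F · x) z := funext fun x => (hF' x).fderiv.symm
  have hz : z ∈ ball z r := mem_ball_self hr
  have hhalf : ball z (r / 2) ⊆ ball z r := ball_subset_ball (half_le_self hr.le)
  have hF'_le (x : α) : ∀ w ∈ ball z (r / 2), ‖fderiv ℂ (F · x) w‖ ≤ (M + M) / (r / 2) :=
    fun w hw => norm_fderiv_le_of_forall_mem_ball_norm_le hr (hF_diff x) (hF_le x) hw
  refine ⟨.of_bound hF'_meas _ (.of_forall fun x => hF'_le x z (mem_ball_self (half_pos hr))),
    hasFDerivAt_integral_of_dominated_of_fderiv_le (ball_mem_nhds z (half_pos hr))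
      (eventually_of_mem (ball_mem_nhds z hr) hF_meas)
      (.of_bound (hF_meas z hz) M (.of_forall fun x => hF_le x z hz)) hF'_meas
      (.of_forall hF'_le) (integrable_const _) (.of_forall fun x w hw => ?_)⟩
  exact ((hF_diff x).differentiableAt (isOpen_ball.mem_nhds (hhalf hw))).hasFDerivAt

end HolomorphicParametricIntegral

section TorusComponents

variable {ι : Type*}

/-- The action of the torus `(ℝ/ℤ)^ι` on `ℂ^ι` by rotation of the coordinates. -/
noncomputable def torusRotation (x : UnitAddTorus ι) : (ι → ℂ) →L[ℂ] (ι → ℂ) :=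
  .pi fun j => ((x j).toCircle : ℂ) • .proj j

@[simp]
theorem torusRotation_apply (x : UnitAddTorus ι) (z : ι → ℂ) (j : ι) :
    torusRotation x z j = (x j).toCircle * z j :=
  rfl

theorem continuous_torusRotation [Finite ι] :
    Continuous (torusRotation : UnitAddTorus ι → (ι → ℂ) →L[ℂ] (ι → ℂ)) := by
  have := Fintype.ofFinite ι
  refine continuous_clm_apply.2 fun z => continuous_pi fun j => ?_
  simp only [torusRotation_apply, ← fourier_one]
  fun_prop

variable [Fintype ι]

theorem prod_torusRotation_zpow (x : UnitAddTorus ι) (z : ι → ℂ) (α : ι → ℤ) :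
    ∏ j, torusRotation x z j ^ α j = (∏ j, z j ^ α j) * mFourier α x := by
  simp only [torusRotation_apply, mul_zpow, Finset.prod_mul_distrib, mul_comm, mFourier,
    ContinuousMap.coe_mk, fourier_apply, AddCircle.toCircle_zsmul, Circle.coe_zpow]

theorem torusRotation_single [DecidableEq ι] (x : UnitAddTorus ι) (j : ι) :
    torusRotation x (Pi.single j 1) = mFourier (Pi.single j 1) x • Pi.single j 1 := by
  ext i
  rw [mFourier_single, fourier_one]
  rcases eq_or_ne i j with rfl | h <;> simp [*]

variable {n : ℕ} {Ω : Set (Fin n → ℂ)}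

theorem IsReinhardt.torusRotation_mem (hΩ : IsReinhardt Ω) {z : Fin n → ℂ} (hz : z ∈ Ω)
    (x : UnitAddTorus (Fin n)) : torusRotation x z ∈ Ω :=
  hΩ z hz _ fun _ => Circle.norm_coe _

/-- The component of weight `m` of `g` under the action of the torus. For a Laurent series this is
its term of exponent `m`. -/
noncomputable def torusComponent (m : ι → ℤ) (g : (ι → ℂ) → ℂ) (z : ι → ℂ) : ℂ :=
  mFourierCoeff (fun x => g (torusRotation x z)) m

theorem norm_torusComponent_le (hΩ : IsReinhardt Ω) {g : (Fin n → ℂ) → ℂ} {M : ℝ}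
    (hg : ∀ z ∈ Ω, ‖g z‖ ≤ M) (m : Fin n → ℤ) {z : Fin n → ℂ} (hz : z ∈ Ω) :
    ‖torusComponent m g z‖ ≤ M :=
  norm_mFourierCoeff_le (fun x => hg _ (hΩ.torusRotation_mem hz x)) m

theorem continuousOn_mFourier_smul_torusRotation (hΩ : IsReinhardt Ω) {g : (Fin n → ℂ) → ℂ}
    (hg : ContinuousOn g Ω) (m : Fin n → ℤ) :
    ContinuousOn (fun p : (Fin n → ℂ) × UnitAddTorus (Fin n) =>
      mFourier m p.2 • g (torusRotation p.2 p.1)) (Ω ×ˢ Set.univ) := by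
  have hrot : Continuous fun p : (Fin n → ℂ) × UnitAddTorus (Fin n) => torusRotation p.2 p.1 :=
    (continuous_torusRotation.comp continuous_snd).clm_apply continuous_fst
  exact ((map_continuous (mFourier m)).comp continuous_snd).continuousOn.smul
    (hg.comp hrot.continuousOn fun p hp => hΩ.torusRotation_mem hp.1 p.2)

theorem hasFDerivAt_torusComponent (hopen : IsOpen Ω) (hΩ : IsReinhardt Ω) {g : (Fin n → ℂ) → ℂ}
    (hg : DifferentiableOn ℂ g Ω) (m : Fin n → ℤ) {z : Fin n → ℂ} (hz : z ∈ Ω) :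
    Integrable (fun x : UnitAddTorus (Fin n) =>
        mFourier (-m) x • (fderiv ℂ g (torusRotation x z) ∘L torusRotation x)) ∧
      HasFDerivAt (torusComponent m g)
        (mFourierCoeff (fun x => fderiv ℂ g (torusRotation x z) ∘L torusRotation x) m) z := by
  obtain ⟨r, hr, hball⟩ := nhds_basis_closedBall.mem_iff.1 (hopen.mem_nhds hz)
  have hsub : ball z r ⊆ Ω := ball_subset_closedBall.trans hball
  have hcont := continuousOn_mFourier_smul_torusRotation hΩ hg.continuousOn (-m)
  obtain ⟨M, hM⟩ := ((isCompact_closedBall z r).prod isCompact_univ).exists_bound_of_continuousOn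
    (hcont.mono (Set.prod_mono hball subset_rfl))
  have hderiv (x : UnitAddTorus (Fin n)) {w : Fin n → ℂ} (hw : w ∈ Ω) :
      HasFDerivAt (fun w => mFourier (-m) x • g (torusRotation x w))
        (mFourier (-m) x • (fderiv ℂ g (torusRotation x w) ∘L torusRotation x)) w :=
    ((hg.differentiableAt (hopen.mem_nhds (hΩ.torusRotation_mem hw x))).hasFDerivAt.comp w
      (torusRotation x).hasFDerivAt).fun_const_smul _
  refine hasFDerivAt_integral_of_differentiableOn_ball (M := M) hr (fun w hw => ?_)
    (fun x w hw => (hderiv x (hsub hw)).differentiableAt.differentiableWithinAt)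
    (fun x w hw => hM (w, x) ⟨ball_subset_closedBall hw, Set.mem_univ x⟩) ?_
    fun x => hderiv x hz
  · exact (hcont.comp_continuous (.prodMk_right w)
      fun x => ⟨hsub hw, Set.mem_univ x⟩).aestronglyMeasurable
  · have hfderiv : StronglyMeasurable fun x => fderiv ℂ g (torusRotation x z) :=
      ((measurable_fderiv ℂ g).comp
        (continuous_torusRotation.clm_apply continuous_const).measurable).stronglyMeasurable
    exact ((map_continuous (mFourier (-m))).stronglyMeasurable.smul
      (isBoundedBilinearMap_comp.continuous.comp_stronglyMeasurable
        (hfderiv.prodMk continuous_torusRotation.stronglyMeasurable))).aestronglyMeasurable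

theorem pderivC_torusComponent (hopen : IsOpen Ω) (hΩ : IsReinhardt Ω) {g : (Fin n → ℂ) → ℂ}
    (hg : DifferentiableOn ℂ g Ω) (m : Fin n → ℤ) (j : Fin n) :
    Ω.EqOn (pderivC j (torusComponent m g)) (torusComponent (m - Pi.single j 1) (pderivC j g)) := by
  intro z hz
  obtain ⟨hint, hderiv⟩ := hasFDerivAt_torusComponent hopen hΩ hg m hz
  rw [pderivC, hderiv.fderiv]
  refine (ContinuousLinearMap.integral_apply hint _).trans (integral_congr_ae (.of_forall ?_))
  intro x
  simp only [pderivC, smul_apply, ContinuousLinearMap.comp_apply,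
    torusRotation_single, map_smul, smul_smul, ← mFourier_add]
  rw [neg_sub, neg_add_eq_sub]

theorem Dmulti_torusComponent (hopen : IsOpen Ω) (hΩ : IsReinhardt Ω) {f : (Fin n → ℂ) → ℂ}
    (hf : ∀ β, DifferentiableOn ℂ (Dmulti β f) Ω) (m : Fin n → ℤ) (β : Fin n → ℕ) :
    Ω.EqOn (Dmulti β (torusComponent m f))
      (torusComponent (fun j => m j - β j) (Dmulti β f)) := by
  induction β using multiIndex_induction with
  | zero => simp [Set.EqOn]
  | add_single β j hβ ih =>
    intro z hz
    rw [Dmulti_add_single hβ, Dmulti_add_single hβ, pderivC_eqOn hopen ih j hz,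
      pderivC_torusComponent hopen hΩ (hf β) _ j hz]
    congr 1
    ext i
    simp [Pi.single_apply, sub_sub]

end TorusComponents

section LaurentTerms

variable {n : ℕ}

/-- The term `a e_α` of a Laurent series in several variables. -/
noncomputable def laurentTerm (a : ℂ) (α : Fin n → ℤ) (z : Fin n → ℂ) : ℂ :=
  a * ∏ j, z j ^ α j

theorem Dmulti_laurentTerm (a : ℂ) (α : Fin n → ℤ) (β : Fin n → ℕ) :
    (Set.univ.pi fun _ => {0}ᶜ).EqOn (Dmulti β (laurentTerm a α))
      fun z => a * ∏ j, deriv^[β j] (· ^ α j) (z j) :=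
  Dmulti_prod a (fun _ => isOpen_compl_singleton)
    (fun _ _ hz => (differentiableAt_zpow.2 (.inl hz)).differentiableWithinAt) β

section Reinhardt

variable {Ω : Set (Fin n → ℂ)} {f : (Fin n → ℂ) → ℂ} {c : (Fin n → ℤ) → ℂ}

theorem laurentTerm_eqOn_torusComponent (hΩ : IsReinhardt Ω)
    (hc : ∀ z ∈ Ω, HasSum (fun α => laurentTerm (c α) α z) (f z)) (α : Fin n → ℤ) :
    Ω.EqOn (laurentTerm (c α) α) (torusComponent α f) := fun z hz =>
  .symm <| mFourierCoeff_of_hasSum (hc z hz).summable (fun x => by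
    simpa only [laurentTerm, prod_torusRotation_zpow, mul_assoc]
      using hc _ (hΩ.torusRotation_mem hz x)) α

theorem Dmulti_laurentTerm_eqOn_torusComponent (hopen : IsOpen Ω) (hΩ : IsReinhardt Ω)
    (hf : ∀ β, DifferentiableOn ℂ (Dmulti β f) Ω)
    (hc : ∀ z ∈ Ω, HasSum (fun α => laurentTerm (c α) α z) (f z))
    (α : Fin n → ℤ) (β : Fin n → ℕ) :
    Ω.EqOn (Dmulti β (laurentTerm (c α) α))
      (torusComponent (fun j => α j - β j) (Dmulti β f)) :=
  (Dmulti_eqOn hopen (laurentTerm_eqOn_torusComponent hΩ hc α) β).trans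
    (Dmulti_torusComponent hopen hΩ hf α β)

theorem continuousOn_Dmulti_laurentTerm (hopen : IsOpen Ω) (hΩ : IsReinhardt Ω)
    (hf : ∀ β, DifferentiableOn ℂ (Dmulti β f) Ω)
    (hc : ∀ z ∈ Ω, HasSum (fun α => laurentTerm (c α) α z) (f z))
    (α : Fin n → ℤ) (β : Fin n → ℕ) : ContinuousOn (Dmulti β (laurentTerm (c α) α)) Ω :=
  ContinuousOn.congr
    (fun _ hz =>
      (hasFDerivAt_torusComponent hopen hΩ (hf β) _ hz).2.continuousAt.continuousWithinAt)
    (Dmulti_laurentTerm_eqOn_torusComponent hopen hΩ hf hc α β)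

theorem norm_Dmulti_laurentTerm_le (hopen : IsOpen Ω) (hΩ : IsReinhardt Ω)
    (hf : ∀ β, DifferentiableOn ℂ (Dmulti β f) Ω)
    (hc : ∀ z ∈ Ω, HasSum (fun α => laurentTerm (c α) α z) (f z))
    (α : Fin n → ℤ) {β : Fin n → ℕ} {M : ℝ} (hM : ∀ z ∈ Ω, ‖Dmulti β f z‖ ≤ M) {z : Fin n → ℂ}
    (hz : z ∈ Ω) : ‖Dmulti β (laurentTerm (c α) α) z‖ ≤ M := by
  rw [Dmulti_laurentTerm_eqOn_torusComponent hopen hΩ hf hc α β hz]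
  exact norm_torusComponent_le hΩ hM _ hz

end Reinhardt

end LaurentTerms

section Decay

theorem sq_div_two_le_mul_sub_one {l : ℤ} (hl : l ≠ 1) : (l : ℝ) ^ 2 / 2 ≤ l * (l - 1) := by
  have h : 2 * l ≤ l ^ 2 := by
    rcases lt_or_gt_of_ne hl with hl | hl <;> nlinarith
  have h' : 2 * (l : ℝ) ≤ (l : ℝ) ^ 2 := by exact_mod_cast h
  linarith

theorem mul_sub_one_pos {l : ℤ} (h₀ : l ≠ 0) (h₁ : l ≠ 1) : 0 < (l : ℝ) * (l - 1) :=
  (by positivity : 0 < (l : ℝ) ^ 2 / 2).trans_le (sq_div_two_le_mul_sub_one h₁)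

theorem mu_nonneg (l : ℤ) : 0 ≤ mu l := by
  unfold mu
  split_ifs with h
  · exact zero_le_one
  · rw [not_or] at h
    exact (one_div_pos.2 (mul_sub_one_pos h.1 h.2)).le

theorem mu_le_two_div_sq {l : ℤ} (hl : l ≠ 0) : mu l ≤ 2 * (1 / (l : ℝ) ^ 2) := by
  rcases eq_or_ne l 1 with rfl | h₁
  · norm_num [mu]
  calc mu l = 1 / ((l : ℝ) * (l - 1)) := if_neg (not_or.2 ⟨hl, h₁⟩)
    _ ≤ 1 / ((l : ℝ) ^ 2 / 2) :=
      one_div_le_one_div_of_le (by positivity) (sq_div_two_le_mul_sub_one h₁)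
    _ = 2 * (1 / (l : ℝ) ^ 2) := by rw [one_div_div, mul_one_div]

theorem summable_mu : Summable mu := by
  refine .of_norm_bounded_eventually ((Real.summable_one_div_int_pow.2 one_lt_two).mul_left 2) ?_
  filter_upwards [(Set.finite_singleton (0 : ℤ)).compl_mem_cofinite] with l hl
  rw [Real.norm_of_nonneg (mu_nonneg l)]
  exact mu_le_two_div_sq hl

/-- The number of times `z ^ l` has to be differentiated to produce the factor `1 / mu l`. -/
def gainOrder (l : ℤ) : ℕ :=
  if l = 0 ∨ l = 1 then 0 else 2

theorem gainOrder_mem (l : ℤ) : gainOrder l ∈ ({0, 2} : Finset ℕ) := by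
  unfold gainOrder
  split_ifs <;> simp

theorem sq_mul_iterate_deriv_zpow (l : ℤ) (b : ℕ) {z : ℂ} (hz : z ≠ 0) :
    z ^ 2 * deriv^[b + 2] (· ^ l) z =
      ((l - b : ℤ) : ℂ) * ((l - b : ℤ) - 1) * deriv^[b] (· ^ l) z := by
  have hpow : z ^ (l - b) = z ^ (l - (b + 2 : ℕ)) * z ^ 2 := by
    rw [← zpow_natCast z 2, ← zpow_add₀ hz]
    congr 1
    push_cast
    ring
  simp only [iter_deriv_zpow, Finset.prod_range_succ]
  rw [hpow]
  push_cast
  ring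

theorem norm_iterate_deriv_zpow_le (l : ℤ) (b : ℕ) {z : ℂ} (hz : z ≠ 0) {R : ℝ} (hR : 1 ≤ R)
    (hzR : ‖z‖ ≤ R) :
    ‖deriv^[b] (· ^ l) z‖ ≤
      R ^ 2 * mu (l - b) * ‖deriv^[b + gainOrder (l - b)] (· ^ l) z‖ := by
  set p := l - (b : ℤ) with hp
  by_cases h : p = 0 ∨ p = 1
  · rw [mu, gainOrder, if_pos h, if_pos h, mul_one, add_zero]
    exact le_mul_of_one_le_left (norm_nonneg _) (one_le_pow₀ hR)
  · have hpos : 0 < (p : ℝ) * (p - 1) := mul_sub_one_pos (not_or.1 h).1 (not_or.1 h).2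
    have hnorm : ‖(p : ℂ) * (p - 1)‖ = p * (p - 1) := by
      rw [← Real.norm_of_nonneg hpos.le, ← Complex.norm_real]
      push_cast
      rfl
    have hgain := congrArg norm (sq_mul_iterate_deriv_zpow l b hz)
    rw [← hp, norm_mul, norm_mul, norm_pow, hnorm] at hgain
    rw [mu, gainOrder, if_neg h, if_neg h, mul_one_div, div_mul_eq_mul_div, le_div_iff₀' hpos,
      ← hgain]
    gcongr

theorem norm_Dmulti_laurentTerm_le_prod_mu_mul {n : ℕ} (a : ℂ) (α : Fin n → ℤ) (β : Fin n → ℕ)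
    {R : ℝ} (hR : 1 ≤ R) {z : Fin n → ℂ} (hz : ∀ j, z j ≠ 0) (hzR : ‖z‖ ≤ R) :
    ‖Dmulti β (laurentTerm a α) z‖ ≤ (∏ j, R ^ 2 * mu (α j - β j)) *
      ‖Dmulti (fun j => β j + gainOrder (α j - β j)) (laurentTerm a α) z‖ := by
  have hz' : z ∈ Set.univ.pi fun _ => ({0}ᶜ : Set ℂ) := fun j _ => hz j
  rw [Dmulti_laurentTerm a α _ hz', Dmulti_laurentTerm a α _ hz', norm_mul, norm_mul,
    norm_prod, norm_prod, mul_left_comm, ← Finset.prod_mul_distrib]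
  gcongr with j
  exact norm_iterate_deriv_zpow_le (α j) (β j) (hz j) hR ((norm_le_pi_norm z j).trans hzR)

theorem exists_norm_Dmulti_laurentTerm_le {n : ℕ} {Ω : Set (Fin n → ℂ)} (hopen : IsOpen Ω)
    (hbd : Bornology.IsBounded Ω) (hΩ : IsReinhardt Ω) {f : (Fin n → ℂ) → ℂ}
    (hf : ∀ β, DifferentiableOn ℂ (Dmulti β f) Ω)
    (hf_bdd : ∀ β, ∃ M, ∀ z ∈ Ω, ‖Dmulti β f z‖ ≤ M) {c : (Fin n → ℤ) → ℂ}
    (hc : ∀ z ∈ Ω, HasSum (fun α => laurentTerm (c α) α z) (f z)) (β : Fin n → ℕ) :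
    ∃ C, 0 ≤ C ∧ ∀ α : Fin n → ℤ, ∀ z ∈ Ω,
      ‖Dmulti β (laurentTerm (c α) α) z‖ ≤ C * ∏ j, mu (α j - β j) := by
  choose M hM using hf_bdd
  obtain ⟨R, hR⟩ := hbd.exists_norm_le
  obtain ⟨C, hC⟩ := ((Fintype.piFinset fun _ : Fin n => ({0, 2} : Finset ℕ)).image
    fun δ => M fun j => β j + δ j).exists_le
  have hMC (α : Fin n → ℤ) : M (fun j => β j + gainOrder (α j - β j)) ≤ max C 0 :=
    (hC _ (Finset.mem_image_of_mem _
      (Fintype.mem_piFinset.2 fun j => gainOrder_mem (α j - β j)))).trans (le_max_left C 0)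
  have hdense : Dense (Set.univ.pi fun _ : Fin n => ({0}ᶜ : Set ℂ)) :=
    dense_pi _ fun _ _ => dense_compl_singleton 0
  refine ⟨(∏ _ : Fin n, max R 1 ^ 2) * max C 0, by positivity, fun α z hz => ?_⟩
  refine le_of_forall_mem_inter_dense_le hopen hdense
    (continuousOn_Dmulti_laurentTerm hopen hΩ hf hc α β).norm (fun w hw => ?_) hz
  calc ‖Dmulti β (laurentTerm (c α) α) w‖
      ≤ (∏ j, max R 1 ^ 2 * mu (α j - β j)) *
          ‖Dmulti (fun j => β j + gainOrder (α j - β j)) (laurentTerm (c α) α) w‖ :=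
        norm_Dmulti_laurentTerm_le_prod_mu_mul _ _ _ (le_max_right R 1)
          (fun j => hw.2 j (Set.mem_univ j)) ((hR w hw.1).trans (le_max_left R 1))
    _ ≤ (∏ j, max R 1 ^ 2 * mu (α j - β j)) * max C 0 := by
        gcongr
        · exact Finset.prod_nonneg fun j _ => mul_nonneg (by positivity) (mu_nonneg _)
        · exact (norm_Dmulti_laurentTerm_le hopen hΩ hf hc α (hM _) hw.1).trans (hMC α)
    _ = (∏ _ : Fin n, max R 1 ^ 2) * max C 0 * ∏ j, mu (α j - β j) := by
        rw [Finset.prod_mul_distrib, mul_right_comm]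

end Decay

section Seminorms

theorem snormMax_nonneg {n : ℕ} (k : ℕ) (Ω : Set (Fin n → ℂ)) (f : (Fin n → ℂ) → ℂ) :
    0 ≤ snormMax k Ω f := by
  refine Real.sSup_nonneg ?_
  rintro _ ⟨β, z, -, -, rfl⟩
  exact norm_nonneg _

theorem snormMax_le_sum {n : ℕ} {Ω : Set (Fin n → ℂ)} {f : (Fin n → ℂ) → ℂ} (k : ℕ)
    {B : (Fin n → ℕ) → ℝ} (hB₀ : ∀ β, 0 ≤ B β) (hB : ∀ β, ∀ z ∈ Ω, ‖Dmulti β f z‖ ≤ B β) :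
    snormMax k Ω f ≤ ∑ β ∈ Finset.Iic (fun _ => k), B β := by
  refine Real.sSup_le ?_ (Finset.sum_nonneg fun β _ => hB₀ β)
  rintro _ ⟨β, z, hz, hβ, rfl⟩
  exact (hB β z hz).trans
    (Finset.single_le_sum (fun β _ => hB₀ β) (Finset.mem_Iic.2 hβ))

theorem AInfinity.exists_norm_Dmulti_le {n : ℕ} {Ω : Set (Fin n → ℂ)} {f : (Fin n → ℂ) → ℂ}
    (hf : AInfinity Ω f) (hbd : Bornology.IsBounded Ω) (β : Fin n → ℕ) :
    ∃ M, ∀ z ∈ Ω, ‖Dmulti β f z‖ ≤ M := by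
  obtain ⟨-, g, hg, hfg⟩ := hf.2 β
  obtain ⟨M, hM⟩ := hbd.isCompact_closure.exists_bound_of_continuousOn hg
  exact ⟨M, fun z hz => hfg hz ▸ hM z (subset_closure hz)⟩

end Seminorms

theorem stmt9_general {n : ℕ} {Ω : Set (Fin n → ℂ)} (hopen : IsOpen Ω)
    (hbd : Bornology.IsBounded Ω) (hRein : IsReinhardt Ω) {f : (Fin n → ℂ) → ℂ}
    (hf : ∀ β, DifferentiableOn ℂ (Dmulti β f) Ω)
    (hf_bdd : ∀ β, ∃ M, ∀ z ∈ Ω, ‖Dmulti β f z‖ ≤ M) {c : (Fin n → ℤ) → ℂ}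
    (hc : ∀ z ∈ Ω, HasSum (fun α : Fin n → ℤ => c α * ∏ j, z j ^ α j) (f z)) (k : ℕ) :
    Summable fun α : Fin n → ℤ => snormMax k Ω (fun z => c α * ∏ j, z j ^ α j) := by
  choose C hC₀ hC using exists_norm_Dmulti_laurentTerm_le hopen hbd hRein hf hf_bdd hc
  have hsummable (β : Fin n → ℕ) :
      Summable fun α : Fin n → ℤ => C β * ∏ j, mu (α j - β j) :=
    (summable_prod_pi (fun _ _ => mu_nonneg _) fun j =>
      summable_mu.comp_injective (sub_left_injective (b := (β j : ℤ)))).mul_left (C β)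
  refine .of_nonneg_of_le (fun α => snormMax_nonneg _ _ _)
    (fun α => snormMax_le_sum k (fun β => ?_) fun β => hC β α)
    (summable_sum fun β _ => hsummable β)
  exact mul_nonneg (hC₀ β) (Finset.prod_nonneg fun j _ => mu_nonneg _)

/-- Absolute convergence of the Laurent series in `A^∞` of a bounded Reinhardt domain:
for every `k`, `∑_{α ∈ ℤⁿ} ‖c_α e_α‖'_{k,Ω} < ∞`. -/
theorem stmt9 {n : ℕ} (Ω : Set (Fin n → ℂ)) (hopen : IsOpen Ω) (hconn : IsConnected Ω)
    (hbd : Bornology.IsBounded Ω) (hRein : IsReinhardt Ω)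
    (f : (Fin n → ℂ) → ℂ) (hf : AInfinity Ω f)
    (c : (Fin n → ℤ) → ℂ)
    (hc : ∀ z ∈ Ω, HasSum (fun α : Fin n → ℤ => c α * ∏ j, z j ^ α j) (f z))
    (k : ℕ) :
    Summable fun α : Fin n → ℤ => snormMax k Ω (fun z => c α * ∏ j, z j ^ α j) :=
  stmt9_general hopen hbd hRein (fun β => (hf.2 β).1) (hf.exists_norm_Dmulti_le hbd) hc k
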